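/- Let f : {0,1}^n → {0,1} be a monotone Boolean function with μ_p(f) > 0, let 0 < p < q < 1, and let ρ = p(1−q)/(q(1−p)). Then μ_q(f) ≥ μ_p(f)²/Stab_ρ(f), where Stab_ρ is taken with respect to the p-biased measure μ_p. -/

import Mathlib

open Finset

namespace GlobalHC

variable {n : ℕ}

/-- Expectation with respect to the `p`-biased measure on `{0,1}^n`. -/
noncomputable def Ep (p : ℝ) (f : (Fin n → Bool) → ℝ) : ℝ :=
  ∑ x : Fin n → Bool, (∏ i, if x i then p else 1 - p) * f x

/-- The `r`-norm with respect to the `p`-biased measure. -/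
noncomputable def pnorm (p r : ℝ) (f : (Fin n → Bool) → ℝ) : ℝ :=
  (Ep p fun x => |f x| ^ r) ^ (1 / r)

/-- The `p`-biased character `χ_S`. -/
noncomputable def chi (p : ℝ) (S : Finset (Fin n)) (x : Fin n → Bool) : ℝ :=
  ∏ i ∈ S, ((if x i then (1 : ℝ) else 0) - p) / Real.sqrt (p * (1 - p))

/-- The `p`-biased Fourier coefficient `f̂(S)`. -/
noncomputable def coeff (p : ℝ) (f : (Fin n → Bool) → ℝ) (S : Finset (Fin n)) : ℝ :=
  Ep p fun x => f x * chi p S x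

/-- The derivative `D_S f = Σ_{T ⊇ S} f̂(T) χ_{T∖S}`. -/
noncomputable def derivS (p : ℝ) (S : Finset (Fin n)) (f : (Fin n → Bool) → ℝ) :
    (Fin n → Bool) → ℝ :=
  fun x => ∑ T ∈ Finset.univ.filter (fun T => S ⊆ T), coeff p f T * chi p (T \ S) x

/-- The generalised influence `I_S(f) = σ^{-2|S|} Σ_{T ⊇ S} f̂(T)²`. -/
noncomputable def genInf (p : ℝ) (S : Finset (Fin n)) (f : (Fin n → Bool) → ℝ) : ℝ :=
  (∑ T ∈ Finset.univ.filter (fun T => S ⊆ T), coeff p f T ^ 2) / (p * (1 - p)) ^ S.card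

/-- The noise operator `T_ρ f = Σ_S ρ^{|S|} f̂(S) χ_S`. -/
noncomputable def noise (p ρ : ℝ) (f : (Fin n → Bool) → ℝ) : (Fin n → Bool) → ℝ :=
  fun x => ∑ S : Finset (Fin n), ρ ^ S.card * coeff p f S * chi p S x

/-- The degree-`r` truncation `f^{≤ r}`. -/
noncomputable def trunc (p : ℝ) (r : ℕ) (f : (Fin n → Bool) → ℝ) : (Fin n → Bool) → ℝ :=
  fun x => ∑ S ∈ Finset.univ.filter (fun S : Finset (Fin n) => S.card ≤ r),
    coeff p f S * chi p S x

/-- The restriction `f_{J→1}` setting all coordinates in `J` to `1`. -/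
def restrict1 (J : Finset (Fin n)) (f : (Fin n → Bool) → ℝ) : (Fin n → Bool) → ℝ :=
  fun x => f (fun i => if i ∈ J then true else x i)

/-- `f` is `(r,δ)`-global (for the `p`-biased measure). -/
def IsGlobal (p r δ : ℝ) (f : (Fin n → Bool) → ℝ) : Prop :=
  ∀ J : Finset (Fin n), (J.card : ℝ) ≤ r → Ep p (restrict1 J f) ≤ Ep p f + δ

/-- The total influence `I[f] = Σ_i Pr_{μ_p}[f(x ⊕ e_i) ≠ f(x)]`. -/
noncomputable def totalInf (p : ℝ) (f : (Fin n → Bool) → ℝ) : ℝ :=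
  ∑ i : Fin n, Ep p fun x => if f (Function.update x i (!x i)) = f x then 0 else 1

/-- Noise stability `Stab_ρ(f) = Σ_S ρ^{|S|} f̂(S)²` (w.r.t. `μ_p`). -/
noncomputable def stab (p ρ : ℝ) (f : (Fin n → Bool) → ℝ) : ℝ :=
  ∑ S : Finset (Fin n), ρ ^ S.card * coeff p f S ^ 2

/-- `f` is monotone. -/
def Mono (f : (Fin n → Bool) → ℝ) : Prop :=
  ∀ x y : Fin n → Bool, (∀ i, x i ≤ y i) → f x ≤ f y

/-!
Draw `y` from `μ_q` and keep each of its ones independently with probability `p / q`. The resulting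
point `x ≤ y` has law `μ_p`, so the conditional expectation `g y = 𝔼[f x | y]` satisfies
`μ_q(g) = μ_p(f)`. Two such points `x, z` that are conditionally independent given `y` are
`ρ`-correlated, since both `μ_p(x) μ_p(z) ∏ i, (1 + ρ χ_i(x) χ_i(z))` and the joint law of `(x, z)`
factor over the coordinates; hence `μ_q(g²) = Stab_ρ(f)`. As `x ≤ y`, the function `g` vanishes
outside any upper set supporting `f`, and Cauchy–Schwarz bounds `μ_q(g)²` by `μ_q(g²)` times the
measure of this set. Both identities are algebraic in the weights, so the argument also covers
`p / q > 1`, where the conditional weights of `x` are signed.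
-/

/-- The weight of the bit `b` under the Bernoulli distribution with parameter `p`; a signed weight
when `p ∉ [0, 1]`. -/
noncomputable def bernoulliWeight (p : ℝ) (b : Bool) : ℝ :=
  if b then p else 1 - p

/-- The `p`-biased character `χ_i` as a function of the single bit `x i`. -/
noncomputable def bitChar (p : ℝ) (b : Bool) : ℝ :=
  ((if b then 1 else 0) - p) / √(p * (1 - p))

/-- The weight of the bit `a` obtained from the bit `c` by keeping a one with probability `r`. -/
noncomputable def thinWeight (r : ℝ) (c a : Bool) : ℝ :=
  bernoulliWeight (if c then r else 0) a

/-- The conditional expectation of `f x` given `y`, where `x` arises from `y` by keeping each one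
independently with probability `r`. -/
noncomputable def thin (r : ℝ) (f : (Fin n → Bool) → ℝ) (y : Fin n → Bool) : ℝ :=
  ∑ x, (∏ i, thinWeight r (y i) (x i)) * f x

theorem bernoulliWeight_nonneg {p : ℝ} (hp₀ : 0 ≤ p) (hp₁ : p ≤ 1) (b : Bool) :
    0 ≤ bernoulliWeight p b := by
  cases b <;> simp [bernoulliWeight, hp₀, hp₁]

theorem Ep_nonneg {p : ℝ} (hp₀ : 0 ≤ p) (hp₁ : p ≤ 1) {f : (Fin n → Bool) → ℝ}
    (hf : ∀ x, 0 ≤ f x) : 0 ≤ Ep p f :=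
  sum_nonneg fun x _ =>
    mul_nonneg (prod_nonneg fun i _ => bernoulliWeight_nonneg hp₀ hp₁ (x i)) (hf x)

theorem stab_nonneg {ρ : ℝ} (hρ : 0 ≤ ρ) (p : ℝ) (f : (Fin n → Bool) → ℝ) : 0 ≤ stab p ρ f :=
  sum_nonneg fun _ _ => by positivity

theorem sq_Ep_le_of_support_subset {p : ℝ} (hp₀ : 0 ≤ p) (hp₁ : p ≤ 1) {g : (Fin n → Bool) → ℝ}
    {s : Set (Fin n → Bool)} (hg : Function.support g ⊆ s) :
    Ep p g ^ 2 ≤ Ep p (fun x => g x ^ 2) * Ep p (s.indicator 1) := by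
  have hw (x : Fin n → Bool) : 0 ≤ ∏ i, bernoulliWeight p (x i) :=
    prod_nonneg fun i _ => bernoulliWeight_nonneg hp₀ hp₁ (x i)
  refine sum_sq_le_sum_mul_sum_of_sq_le_mul univ (fun x _ => mul_nonneg (hw x) (sq_nonneg _))
    (fun x _ => mul_nonneg (hw x) (Set.indicator_nonneg (fun _ _ => zero_le_one) x)) fun x _ => ?_
  by_cases hx : x ∈ s
  · rw [Set.indicator_of_mem hx, Pi.one_apply]
    exact le_of_eq (by ring)
  · simp [Function.notMem_support.mp fun h => hx (hg h)]

theorem sum_prod_apply {ι κ R : Type*} [Fintype ι] [DecidableEq ι] [Fintype κ] [CommSemiring R]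
    (F : ι → κ → R) : ∑ x : ι → κ, ∏ i, F i (x i) = ∏ i, ∑ c, F i c := by
  rw [prod_univ_sum, Fintype.piFinset_univ]

theorem sum_bernoulliWeight_mul_thinWeight (q r : ℝ) (a : Bool) :
    ∑ c, bernoulliWeight q c * thinWeight r c a = bernoulliWeight (q * r) a := by
  simp only [bernoulliWeight, thinWeight, Fintype.sum_bool, if_true, Bool.false_eq_true, if_false]
  cases a <;> simp only [if_true, Bool.false_eq_true, if_false] <;> ring

theorem Ep_thin (q r : ℝ) (f : (Fin n → Bool) → ℝ) : Ep q (thin r f) = Ep (q * r) f := by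
  calc Ep q (thin r f)
    _ = ∑ y : Fin n → Bool, ∑ x,
          (∏ i, bernoulliWeight q (y i) * thinWeight r (y i) (x i)) * f x := by
      simp only [Ep, thin, bernoulliWeight, mul_sum, prod_mul_distrib, mul_assoc]
    _ = ∑ x, (∏ i, bernoulliWeight (q * r) (x i)) * f x := by
      rw [sum_comm]
      refine sum_congr rfl fun x _ => ?_
      rw [← sum_mul, sum_prod_apply fun i c => bernoulliWeight q c * thinWeight r c (x i)]
      simp only [sum_bernoulliWeight_mul_thinWeight]

theorem le_of_thinWeight_ne_zero {r : ℝ} {c a : Bool} (h : thinWeight r c a ≠ 0) : a ≤ c := by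
  cases a <;> cases c <;> simp_all [thinWeight, bernoulliWeight]

theorem support_thin_subset (r : ℝ) {f : (Fin n → Bool) → ℝ} {s : Set (Fin n → Bool)}
    (hs : IsUpperSet s) (hf : Function.support f ⊆ s) : Function.support (thin r f) ⊆ s := by
  intro y hy
  obtain ⟨x, -, hx⟩ := exists_ne_zero_of_sum_ne_zero hy
  have hxy : x ≤ y := fun i =>
    le_of_thinWeight_ne_zero (prod_ne_zero_iff.mp (left_ne_zero_of_mul hx) i (mem_univ i))
  exact hs hxy (hf (right_ne_zero_of_mul hx))

theorem Ep_sq_thin (q r : ℝ) (f : (Fin n → Bool) → ℝ) :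
    Ep q (fun y => thin r f y ^ 2) = ∑ x, ∑ z,
      (∏ i, ∑ c, bernoulliWeight q c * (thinWeight r c (x i) * thinWeight r c (z i))) *
        (f x * f z) := by
  calc Ep q (fun y => thin r f y ^ 2)
    _ = ∑ y : Fin n → Bool, ∑ x, ∑ z, (∏ i, bernoulliWeight q (y i) *
          (thinWeight r (y i) (x i) * thinWeight r (y i) (z i))) * (f x * f z) := by
      simp only [Ep, thin, sq, sum_mul_sum]
      simp only [mul_sum, prod_mul_distrib, bernoulliWeight]
      refine sum_congr rfl fun y _ => sum_congr rfl fun x _ => sum_congr rfl fun z _ => ?_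
      ring
    _ = ∑ x, ∑ z, ∑ y : Fin n → Bool, (∏ i, bernoulliWeight q (y i) *
          (thinWeight r (y i) (x i) * thinWeight r (y i) (z i))) * (f x * f z) := by
      rw [sum_comm]
      exact sum_congr rfl fun x _ => sum_comm
    _ = _ := by
      refine sum_congr rfl fun x _ => sum_congr rfl fun z _ => ?_
      rw [← sum_mul, sum_prod_apply fun i c =>
        bernoulliWeight q c * (thinWeight r c (x i) * thinWeight r c (z i))]

theorem stab_eq_sum_prod_one_add (p ρ : ℝ) (f : (Fin n → Bool) → ℝ) :
    stab p ρ f = ∑ x, ∑ z, (∏ i, bernoulliWeight p (x i) * bernoulliWeight p (z i) *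
      (1 + ρ * (bitChar p (x i) * bitChar p (z i)))) * (f x * f z) := by
  calc stab p ρ f
    _ = ∑ S, ∑ x, ∑ z, (∏ i, bernoulliWeight p (x i) * bernoulliWeight p (z i)) *
          (∏ i ∈ S, ρ * (bitChar p (x i) * bitChar p (z i))) * (f x * f z) := by
      simp only [stab, coeff, Ep, chi, sq, sum_mul_sum]
      simp only [mul_sum, prod_mul_distrib, prod_const, bernoulliWeight, bitChar]
      refine sum_congr rfl fun S _ => sum_congr rfl fun x _ => sum_congr rfl fun z _ => ?_
      ring
    _ = ∑ x, ∑ z, ∑ S, (∏ i, bernoulliWeight p (x i) * bernoulliWeight p (z i)) *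
          (∏ i ∈ S, ρ * (bitChar p (x i) * bitChar p (z i))) * (f x * f z) := by
      rw [sum_comm]
      exact sum_congr rfl fun x _ => sum_comm
    _ = _ := by
      refine sum_congr rfl fun x _ => sum_congr rfl fun z _ => ?_
      rw [← sum_mul, ← mul_sum, ← powerset_univ, ← prod_one_add, ← prod_mul_distrib]

theorem sum_bernoulliWeight_mul_thinWeight_mul_thinWeight {p q : ℝ} (hp₀ : 0 < p) (hp₁ : p < 1)
    (hq : q ≠ 0) (a b : Bool) :
    ∑ c, bernoulliWeight q c * (thinWeight (p / q) c a * thinWeight (p / q) c b) =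
      bernoulliWeight p a * bernoulliWeight p b *
        (1 + p * (1 - q) / (q * (1 - p)) * (bitChar p a * bitChar p b)) := by
  have hp₁' : 0 < 1 - p := sub_pos.mpr hp₁
  rw [bitChar, bitChar, div_mul_div_comm, Real.mul_self_sqrt (by positivity)]
  simp only [bernoulliWeight, thinWeight, Fintype.sum_bool, if_true, Bool.false_eq_true, if_false]
  cases a <;> cases b <;> simp only [if_true, Bool.false_eq_true, if_false] <;> field_simp <;> ring

theorem Ep_sq_thin_eq_stab {p q : ℝ} (hp₀ : 0 < p) (hp₁ : p < 1) (hq : q ≠ 0)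
    (f : (Fin n → Bool) → ℝ) :
    Ep q (fun y => thin (p / q) f y ^ 2) = stab p (p * (1 - q) / (q * (1 - p))) f := by
  simp only [Ep_sq_thin, stab_eq_sum_prod_one_add,
    sum_bernoulliWeight_mul_thinWeight_mul_thinWeight hp₀ hp₁ hq]

theorem isUpperSet_support_of_mono {f : (Fin n → Bool) → ℝ} (hf : ∀ x, 0 ≤ f x) (hmono : Mono f) :
    IsUpperSet (Function.support f) := fun x y hxy hx =>
  (((hf x).lt_of_ne' hx).trans_le (hmono x y hxy)).ne'

theorem indicator_support_one_of_eq_zero_or_one {f : (Fin n → Bool) → ℝ}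
    (hf : ∀ x, f x = 0 ∨ f x = 1) : (Function.support f).indicator 1 = f := by
  ext x
  rcases hf x with h | h <;> simp [h]

theorem statement16_general {p q : ℝ} (hp₀ : 0 < p) (hp₁ : p < 1) (hq₀ : 0 < q) (hq₁ : q ≤ 1)
    {f : (Fin n → Bool) → ℝ} {s : Set (Fin n → Bool)} (hs : IsUpperSet s)
    (hf : Function.support f ⊆ s) :
    Ep p f ^ 2 ≤ stab p (p * (1 - q) / (q * (1 - p))) f * Ep q (s.indicator 1) := by
  calc Ep p f ^ 2
    _ = Ep q (thin (p / q) f) ^ 2 := by rw [Ep_thin, mul_div_cancel₀ p hq₀.ne']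
    _ ≤ Ep q (fun y => thin (p / q) f y ^ 2) * Ep q (s.indicator 1) :=
      sq_Ep_le_of_support_subset hq₀.le hq₁ (support_thin_subset (p / q) hs hf)
    _ = stab p (p * (1 - q) / (q * (1 - p))) f * Ep q (s.indicator 1) := by
      rw [Ep_sq_thin_eq_stab hp₀ hp₁ hq₀.ne']

/-- noise sensitivity implies a sharp threshold (Proposition 5.5). -/
theorem statement16 {n : ℕ} (p q ρ : ℝ) (hp : 0 < p) (hpq : p < q) (hq : q < 1)
    (hρ : ρ = p * (1 - q) / (q * (1 - p)))
    (f : (Fin n → Bool) → ℝ) (hbool : ∀ x, f x = 0 ∨ f x = 1)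
    (hmono : Mono f) (hpos : 0 < Ep p f) :
    Ep p f ^ 2 / stab p ρ f ≤ Ep q f := by
  have hf₀ (x) : 0 ≤ f x := by rcases hbool x with h | h <;> simp [h]
  have hq₀ : 0 < q := hp.trans hpq
  have hp₁ : p < 1 := hpq.trans hq
  have hρ₀ : 0 ≤ ρ := hρ ▸ div_nonneg (mul_nonneg hp.le (sub_nonneg.mpr hq.le))
    (mul_nonneg hq₀.le (sub_nonneg.mpr hp₁.le))
  refine div_le_of_le_mul₀ (stab_nonneg hρ₀ p f) (Ep_nonneg hq₀.le hq.le hf₀) ?_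
  have key := statement16_general hp hp₁ hq₀ hq.le (isUpperSet_support_of_mono hf₀ hmono) subset_rfl
  rwa [indicator_support_one_of_eq_zero_or_one hbool, ← hρ, mul_comm] at key

end GlobalHC
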